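/- Let A be a finite-dimensional ℤ-graded ℂ-algebra and c a degree-2 central element of A. Every projective graded Ã_c-module, regarded as an (A,c)-complex, is isomorphic to the zero object in the homotopy category K(A,c); that is, its identity morphism is null-homotopic. Consequently, the canonical functor from graded Ã_c-modules to K(A,c) factors through the stable category Mod̲(Ã_c). -/

import Mathlib

/-!
Every `(A,c)`-complex `P` is the image of a contractible one: the induced complex
`Ã_c ⊗_A P = P ⊕ dP` maps onto `P` by the action map.  If `P` is projective this surjection
has a section `g`, and the contraction of the induced complex yields one of `P`.

The `A`-action on the summand `dP` is twisted by the parity of `A`.  The grading involution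
`ε m = (-1)^{|m|} m` of `P` (`signMap`) untwists it, so the induced complex (`inducedComplex`) is
realised on `P × P` with the diagonal action, `(x, y)` standing for `x + d(ε y)`, with differential
`(x, y) ↦ (c ε y, ε x)`.  Writing the section as `g = (g₁, g₂)`, the relation `g₂ d = ε g₁`
and the section identity `g₁ + d ε g₂ = id` say exactly that `h = ε g₂` satisfies
`h d + d h = id`.
The second claim follows by composing the contraction with the two factors.
-/

/-!
STATEMENT 3: Let A be a finite-dimensional ℤ-graded ℂ-algebra and c a degree-2
central element.  Every projective graded Ã_c-module (i.e. projective object in the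
category Com(A,c) of (A,c)-complexes) is zero in the homotopy category K(A,c): its
identity is null-homotopic.  Consequently every morphism of (A,c)-complexes that
factors through a projective is null-homotopic, i.e. the canonical functor
Mod(Ã_c) → K(A,c) factors through the stable category Mod̲(Ã_c).
-/

universe u v

structure ACComplex (A : Type u) [Ring A] [Algebra ℂ A] (𝒜 : ℤ → Submodule ℂ A)
    (c : A) where
  carrier : Type v
  [acg : AddCommGroup carrier]
  [mod : Module A carrier]
  grading : ℤ → AddSubgroup carrier
  decomp : DirectSum.IsInternal grading
  smul_mem : ∀ {i j : ℤ} {a : A} {m : carrier},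
    a ∈ 𝒜 i → m ∈ grading j → a • m ∈ grading (i + j)
  d : carrier →+ carrier
  d_degree : ∀ (i : ℤ), ∀ m ∈ grading i, d m ∈ grading (i + 1)
  d_sq : ∀ m : carrier, d (d m) = c • m
  d_supercomm : ∀ (i : ℤ) (a : A), a ∈ 𝒜 i → ∀ m : carrier,
    d (a • m) = ((-1 : ℤ) ^ i.natAbs) • (a • d m)

attribute [instance] ACComplex.acg ACComplex.mod

variable {A : Type u} [Ring A] [Algebra ℂ A] {𝒜 : ℤ → Submodule ℂ A} {c : A}

def IsComplexMorphism (M N : ACComplex A 𝒜 c) (f : M.carrier →ₗ[A] N.carrier) : Prop :=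
  (∀ i : ℤ, ∀ m ∈ M.grading i, f m ∈ N.grading i) ∧ ∀ m, f (M.d m) = N.d (f m)

def IsNullHomotopic (M N : ACComplex A 𝒜 c) (f : M.carrier →ₗ[A] N.carrier) : Prop :=
  ∃ h : M.carrier →+ N.carrier,
    (∀ i : ℤ, ∀ m ∈ M.grading i, h m ∈ N.grading (i - 1)) ∧
    (∀ (i : ℤ) (a : A), a ∈ 𝒜 i → ∀ m : M.carrier,
      h (a • m) = ((-1 : ℤ) ^ i.natAbs) • (a • h m)) ∧
    (∀ m : M.carrier, f m = h (M.d m) + N.d (h m))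

/-- A projective graded `Ã_c`-module, i.e. a projective object of the category
`Com(A,c)` of `(A,c)`-complexes: every morphism to the target of a surjective
morphism of complexes lifts. -/
def IsProjectiveComplex (P : ACComplex.{u, v} A 𝒜 c) : Prop :=
  ∀ (X Y : ACComplex.{u, v} A 𝒜 c)
    (p : X.carrier →ₗ[A] Y.carrier) (f : P.carrier →ₗ[A] Y.carrier),
    IsComplexMorphism X Y p → Function.Surjective p → IsComplexMorphism P Y f →
    ∃ g : P.carrier →ₗ[A] X.carrier, IsComplexMorphism P X g ∧ p ∘ₗ g = f

/-! ### Signs -/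

/-- The Koszul sign `(-1)^i`. -/
def koszulSign (i : ℤ) : ℤ := (-1) ^ i.natAbs

lemma koszulSign_eq (i : ℤ) : koszulSign i = if Even i then 1 else -1 := by
  unfold koszulSign
  split_ifs with h
  · exact Even.neg_one_pow (Int.natAbs_even.mpr h)
  · exact Odd.neg_one_pow (Int.natAbs_odd.mpr (Int.not_even_iff_odd.mp h))

lemma koszulSign_add (i j : ℤ) : koszulSign (i + j) = koszulSign i * koszulSign j := by
  simp only [koszulSign_eq, Int.even_add]
  split_ifs <;> simp_all

lemma koszulSign_mul_self (i : ℤ) : koszulSign i * koszulSign i = 1 := by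
  rw [koszulSign_eq]
  split_ifs <;> simp

/-! ### Internal gradings -/

section Internal

variable {M : Type*} [AddCommGroup M]

/-- A family of subgroups spanning `M` and admitting projections is an internal grading. -/
lemma isInternal_of_projections (G : ℤ → AddSubgroup M) (π : ℤ → M →+ M)
    (h1 : ∀ i, ∀ m ∈ G i, π i m = m) (h2 : ∀ i j, i ≠ j → ∀ m ∈ G i, π j m = 0)
    (hG : ∀ m, m ∈ ⨆ i, G i) : DirectSum.IsInternal G := by
  constructor
  · -- The `i`-th projection of the sum of a family is its `i`-th entry.
    have key : ∀ (i : ℤ) (z : DirectSum ℤ fun i => G i),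
        π i (DirectSum.coeAddMonoidHom G z) = (z i : M) := by
      intro i z
      induction z using DirectSum.induction_on with
      | zero => simp
      | of j x =>
        rw [DirectSum.coeAddMonoidHom_of]
        by_cases hij : j = i
        · subst hij
          rw [h1 _ _ x.2, DirectSum.of_eq_same]
        · rw [h2 _ _ hij _ x.2, DirectSum.of_eq_of_ne _ _ _ (Ne.symm hij)]
          rfl
      | add x y hx hy => simp [hx, hy]
    intro z w hzw
    ext i
    rw [← key i z, ← key i w, hzw]
  · intro m
    have hle : (⨆ i, G i) ≤ (DirectSum.coeAddMonoidHom G).range := by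
      refine iSup_le fun i x hx => ⟨DirectSum.of (fun i => G i) i ⟨x, hx⟩, ?_⟩
      rw [DirectSum.coeAddMonoidHom_of]
    exact hle (hG m)

variable {G : ℤ → AddSubgroup M}

/-- Additive maps on an internally graded group may be prescribed on the homogeneous parts. -/
lemma exists_hom_of_isInternal {N : Type*} [AddCommGroup N] (hG : DirectSum.IsInternal G)
    (φ : ∀ i, G i →+ N) :
    ∃ f : M →+ N, ∀ (i : ℤ) (m : M) (hm : m ∈ G i), f m = φ i ⟨m, hm⟩ := by
  let e := AddEquiv.ofBijective (DirectSum.coeAddMonoidHom G) hG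
  refine ⟨(DirectSum.toAddMonoid φ).comp e.symm.toAddMonoidHom, fun i m hm => ?_⟩
  have : e.symm m = DirectSum.of (fun i => G i) i ⟨m, hm⟩ := by
    rw [AddEquiv.symm_apply_eq]
    exact (DirectSum.coeAddMonoidHom_of G i ⟨m, hm⟩).symm
  simp [this]

lemma mem_iSup_of_isInternal (hG : DirectSum.IsInternal G) (m : M) : m ∈ ⨆ i, G i := by
  obtain ⟨z, rfl⟩ := hG.2 m
  induction z using DirectSum.induction_on with
  | zero => simp
  | of j x =>
    rw [DirectSum.coeAddMonoidHom_of]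
    exact AddSubgroup.mem_iSup_of_mem j x.2
  | add x y hx hy => rw [map_add]; exact add_mem hx hy

lemma induction_of_isInternal (hG : DirectSum.IsInternal G) {p : M → Prop}
    (hom : ∀ i, ∀ m ∈ G i, p m) (zero : p 0) (add : ∀ x y, p x → p y → p (x + y)) (m : M) :
    p m :=
  AddSubgroup.iSup_induction G (C := p) (mem_iSup_of_isInternal hG m) hom zero add

lemma exists_projections (hG : DirectSum.IsInternal G) :
    ∃ π : ℤ → M →+ M, (∀ i, ∀ m ∈ G i, π i m = m) ∧
      ∀ i j, i ≠ j → ∀ m ∈ G i, π j m = 0 := by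
  have h : ∀ j : ℤ, ∃ f : M →+ M, ∀ (i : ℤ) (m : M) (_ : m ∈ G i),
      f m = if i = j then m else 0 := by
    intro j
    obtain ⟨f, hf⟩ := exists_hom_of_isInternal hG
      (fun i => if i = j then (G i).subtype else 0)
    refine ⟨f, fun i m hm => ?_⟩
    rw [hf i m hm]
    split_ifs <;> rfl
  choose π hπ using h
  exact ⟨π, fun i m hm => by simp [hπ i i m hm], fun i j hij m hm => by simp [hπ j i m hm, hij]⟩

/-- The grading on `M × M` whose second factor is shifted by one is internal. -/
lemma isInternal_prod_shift (hG : DirectSum.IsInternal G) :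
    DirectSum.IsInternal fun n : ℤ => (G n).prod (G (n - 1)) := by
  obtain ⟨π, h1, h2⟩ := exists_projections hG
  refine isInternal_of_projections _ (fun n => (π n).prodMap (π (n - 1))) ?_ ?_ ?_
  · rintro i ⟨x, y⟩ ⟨hx, hy⟩
    exact Prod.ext (h1 _ _ hx) (h1 _ _ hy)
  · rintro i j hij ⟨x, y⟩ ⟨hx, hy⟩
    exact Prod.ext (h2 _ _ hij _ hx) (h2 (i - 1) (j - 1) (by omega) _ hy)
  · rintro ⟨x, y⟩
    have hx : ((x, 0) : M × M) ∈ ⨆ n : ℤ, (G n).prod (G (n - 1)) := by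
      induction x using induction_of_isInternal hG with
      | hom i m hm => exact AddSubgroup.mem_iSup_of_mem i ⟨hm, zero_mem _⟩
      | zero => exact zero_mem _
      | add a b ha hb => simpa using add_mem ha hb
    have hy : ((0, y) : M × M) ∈ ⨆ n : ℤ, (G n).prod (G (n - 1)) := by
      induction y using induction_of_isInternal hG with
      | hom i m hm =>
        exact AddSubgroup.mem_iSup_of_mem (i + 1) ⟨zero_mem _, by simpa using hm⟩
      | zero => exact zero_mem _
      | add a b ha hb => simpa using add_mem ha hb
    simpa using add_mem hx hy

end Internal

/-! ### The grading involution -/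

lemma exists_signMap (P : ACComplex.{u, v} A 𝒜 c) :
    ∃ ε : P.carrier →+ P.carrier, ∀ i, ∀ m ∈ P.grading i, ε m = koszulSign i • m := by
  obtain ⟨f, hf⟩ := exists_hom_of_isInternal P.decomp
    (fun i => koszulSign i • (P.grading i).subtype)
  exact ⟨f, fun i m hm => by rw [hf i m hm]; rfl⟩

/-- The grading involution `ε` of a complex, acting on degree `i` as `(-1)^i`. -/
noncomputable def signMap (P : ACComplex.{u, v} A 𝒜 c) : P.carrier →+ P.carrier :=
  (exists_signMap P).choose

lemma signMap_of_mem (P : ACComplex.{u, v} A 𝒜 c) {i : ℤ} {m : P.carrier}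
    (hm : m ∈ P.grading i) : signMap P m = koszulSign i • m :=
  (exists_signMap P).choose_spec i m hm

lemma signMap_mem (P : ACComplex.{u, v} A 𝒜 c) {i : ℤ} {m : P.carrier}
    (hm : m ∈ P.grading i) : signMap P m ∈ P.grading i := by
  rw [signMap_of_mem P hm]
  exact zsmul_mem hm _

lemma signMap_signMap (P : ACComplex.{u, v} A 𝒜 c) (m : P.carrier) :
    signMap P (signMap P m) = m := by
  induction m using induction_of_isInternal P.decomp with
  | hom i m hm =>
    rw [signMap_of_mem P hm, map_zsmul, signMap_of_mem P hm, smul_smul, koszulSign_mul_self,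
      one_smul]
  | zero => simp
  | add x y hx hy => rw [map_add, map_add, hx, hy]

lemma signMap_smul (P : ACComplex.{u, v} A 𝒜 c) {i : ℤ} {a : A} (ha : a ∈ 𝒜 i)
    (m : P.carrier) : signMap P (a • m) = koszulSign i • (a • signMap P m) := by
  induction m using induction_of_isInternal P.decomp with
  | hom j m hm =>
    rw [signMap_of_mem P hm, signMap_of_mem P (P.smul_mem ha hm), koszulSign_add, mul_smul,
      smul_comm a (koszulSign j) m]
  | zero => simp
  | add x y hx hy => rw [smul_add, map_add, map_add, hx, hy, smul_add, smul_add]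

/-- `d ∘ ε` is honestly `A`-linear: the signs of `d` and `ε` cancel on homogeneous scalars. -/
lemma d_signMap_smul [GradedAlgebra 𝒜] (P : ACComplex.{u, v} A 𝒜 c) (a : A)
    (m : P.carrier) : P.d (signMap P (a • m)) = a • P.d (signMap P m) := by
  induction a using DirectSum.Decomposition.inductionOn 𝒜 with
  | zero => simp
  | @homogeneous i a =>
    rw [signMap_smul P a.2, map_zsmul, P.d_supercomm i a a.2]
    change koszulSign i • koszulSign i • _ = _
    rw [smul_smul, koszulSign_mul_self, one_smul]
  | add a b ha hb => rw [add_smul, map_add, map_add, ha, hb, add_smul]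

/-! ### The induced complex -/

/-- The induced complex `Ã_c ⊗_A P`, realised on `P × P` with the diagonal `A`-action:
`(x, y)` stands for `1 ⊗ x + d ⊗ ε y`. -/
noncomputable def inducedComplex (hc : c ∈ 𝒜 2) (hc_central : ∀ a : A, c * a = a * c)
    (P : ACComplex.{u, v} A 𝒜 c) : ACComplex.{u, v} A 𝒜 c where
  carrier := P.carrier × P.carrier
  grading n := (P.grading n).prod (P.grading (n - 1))
  decomp := isInternal_prod_shift P.decomp
  smul_mem := by
    rintro i j a ⟨x, y⟩ ha ⟨hx, hy⟩
    refine ⟨P.smul_mem ha hx, ?_⟩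
    have := P.smul_mem ha hy
    rwa [← add_sub_assoc] at this
  d := (((DistribSMul.toAddMonoidHom P.carrier c).comp (signMap P)).comp
      (AddMonoidHom.snd _ _)).prod ((signMap P).comp (AddMonoidHom.fst _ _))
  d_degree := by
    rintro i ⟨x, y⟩ ⟨hx, hy⟩
    refine ⟨?_, ?_⟩
    · have := P.smul_mem hc (signMap_mem P hy)
      rwa [show (2 : ℤ) + (i - 1) = i + 1 by ring] at this
    · have := signMap_mem P hx
      simpa using this
  d_sq := by
    rintro ⟨x, y⟩
    refine Prod.ext ?_ ?_
    · change c • signMap P (signMap P x) = c • x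
      rw [signMap_signMap]
    · change signMap P (c • signMap P y) = c • y
      rw [signMap_smul P hc, signMap_signMap]
      simp [koszulSign]
  d_supercomm := by
    rintro i a ha ⟨x, y⟩
    refine Prod.ext ?_ ?_
    · change c • signMap P (a • y) = koszulSign i • (a • (c • signMap P y))
      rw [signMap_smul P ha, smul_comm c, smul_smul c a, hc_central, mul_smul]
    · exact signMap_smul P ha x

/-- The action map `Ã_c ⊗_A P → P`, that is `(x, y) ↦ x + d (ε y)`. -/
noncomputable def actionMap [GradedAlgebra 𝒜] (P : ACComplex.{u, v} A 𝒜 c) :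
    P.carrier × P.carrier →ₗ[A] P.carrier where
  toFun z := z.1 + P.d (signMap P z.2)
  map_add' z w := by
    simp only [Prod.fst_add, Prod.snd_add, map_add]
    abel
  map_smul' a z := by
    simp only [Prod.smul_fst, Prod.smul_snd, d_signMap_smul, RingHom.id_apply, smul_add]

lemma actionMap_isComplexMorphism [GradedAlgebra 𝒜] (hc : c ∈ 𝒜 2)
    (hc_central : ∀ a : A, c * a = a * c) (P : ACComplex.{u, v} A 𝒜 c) :
    IsComplexMorphism (inducedComplex hc hc_central P) P (actionMap P) := by
  constructor
  · rintro i ⟨x, y⟩ ⟨hx, hy⟩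
    refine add_mem hx ?_
    have := P.d_degree _ _ (signMap_mem P hy)
    rwa [sub_add_cancel] at this
  · rintro ⟨x, y⟩
    change c • signMap P y + P.d (signMap P (signMap P x)) = P.d (x + P.d (signMap P y))
    rw [signMap_signMap, map_add, P.d_sq, add_comm]

/-! ### Contractibility -/

lemma isNullHomotopic_id_of_projective [GradedAlgebra 𝒜] (hc : c ∈ 𝒜 2)
    (hc_central : ∀ a : A, c * a = a * c) (P : ACComplex.{u, v} A 𝒜 c)
    (hP : IsProjectiveComplex P) : IsNullHomotopic P P LinearMap.id := by
  obtain ⟨g, ⟨hdeg, hd⟩, hsec⟩ := hP (inducedComplex hc hc_central P) P (actionMap P)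
    LinearMap.id (actionMap_isComplexMorphism hc hc_central P)
    (fun x => ⟨((x, 0) : P.carrier × P.carrier), by
      change x + P.d (signMap P 0) = x
      simp⟩)
    ⟨fun _ _ hm => hm, fun _ => rfl⟩
  let g' : P.carrier →ₗ[A] P.carrier × P.carrier := g
  refine ⟨(signMap P).comp ((AddMonoidHom.snd _ _).comp g'.toAddMonoidHom), ?_, ?_, ?_⟩
  · intro i m hm
    exact signMap_mem P (hdeg i m hm).2
  · intro i a ha m
    change signMap P (g' (a • m)).2 = koszulSign i • (a • signMap P (g' m).2)
    rw [map_smul, Prod.smul_snd, signMap_smul P ha]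
  · intro m
    change m = signMap P (g' (P.d m)).2 + P.d (signMap P (g' m).2)
    have h2 : (g' (P.d m)).2 = signMap P (g' m).1 := congrArg Prod.snd (hd m)
    have h1 : (g' m).1 + P.d (signMap P (g' m).2) = m := LinearMap.congr_fun hsec m
    rw [h2, signMap_signMap, h1]

lemma IsNullHomotopic.comp {M P N : ACComplex.{u, v} A 𝒜 c}
    {q : M.carrier →ₗ[A] P.carrier} {r : P.carrier →ₗ[A] N.carrier}
    (hP : IsNullHomotopic P P LinearMap.id) (hq : IsComplexMorphism M P q)
    (hr : IsComplexMorphism P N r) : IsNullHomotopic M N (r ∘ₗ q) := by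
  obtain ⟨h, hdeg, hlin, hh⟩ := hP
  refine ⟨r.toAddMonoidHom.comp (h.comp q.toAddMonoidHom), ?_, ?_, ?_⟩
  · intro i m hm
    exact hr.1 _ _ (hdeg _ _ (hq.1 _ _ hm))
  · intro i a ha m
    change r (h (q (a • m))) = _ • (a • r (h (q m)))
    rw [map_smul, hlin i a ha, map_zsmul, map_smul]
  · intro m
    change r (q m) = r (h (q (M.d m))) + N.d (r (h (q m)))
    rw [hq.2, ← hr.2, ← map_add]
    exact congrArg r (hh (q m))

/-- Over a finite-dimensional ℤ-graded ℂ-algebra `A` with a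
degree-2 central element `c`: (1) every projective graded `Ã_c`-module, viewed as
an `(A,c)`-complex, is isomorphic to zero in the homotopy category `K(A,c)`, i.e.
its identity morphism is null-homotopic; and (2) consequently any morphism of
`(A,c)`-complexes factoring through a projective is null-homotopic, so the
canonical functor from graded `Ã_c`-modules to `K(A,c)` factors through the
stable category `Mod̲(Ã_c)`. -/
theorem projective_complex_contractible
    [GradedAlgebra 𝒜] [FiniteDimensional ℂ A]
    (hc : c ∈ 𝒜 2) (hc_central : ∀ a : A, c * a = a * c) :
    (∀ P : ACComplex.{u, v} A 𝒜 c, IsProjectiveComplex P →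
      IsNullHomotopic P P LinearMap.id) ∧
    (∀ (M N : ACComplex.{u, v} A 𝒜 c) (f : M.carrier →ₗ[A] N.carrier),
      IsComplexMorphism M N f →
      (∃ (P : ACComplex.{u, v} A 𝒜 c) (q : M.carrier →ₗ[A] P.carrier)
          (r : P.carrier →ₗ[A] N.carrier),
        IsProjectiveComplex P ∧ IsComplexMorphism M P q ∧ IsComplexMorphism P N r ∧
        f = r ∘ₗ q) →
      IsNullHomotopic M N f) := by
  refine ⟨isNullHomotopic_id_of_projective hc hc_central, ?_⟩
  rintro M N f - ⟨P, q, r, hP, hq, hr, rfl⟩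
  exact (isNullHomotopic_id_of_projective hc hc_central P hP).comp hq hr
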